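/- Let 𝒰, 𝒳, 𝒴 be finite sets and let P_{UXY} be a pmf such that U → X → Y is a Markov chain (i.e., I(U;Y|X) = 0). Let g : 𝒴 → 𝒵 be any function and set Z = g(Y). Then I(U; X | Y) ≤ I(U; X | Z). -/

import Mathlib

open scoped BigOperators

noncomputable section

open Classical in
/-- Pushforward of a finitely supported mass function along a map. -/
def pushf {Ω α : Type*} [Fintype Ω] (p : Ω → ℝ) (f : Ω → α) : α → ℝ :=
  fun a => ∑ ω, if f ω = a then p ω else 0

/-- `p` is a probability mass function. -/
def IsPMF {α : Type*} [Fintype α] (p : α → ℝ) : Prop :=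
  (∀ a, 0 ≤ p a) ∧ ∑ a, p a = 1

/-- Kullback–Leibler divergence `D(p‖q)` of mass functions, valued in `EReal`
(equal to `⊤` if `p` is not absolutely continuous w.r.t. `q`). -/
def klDiv {α : Type*} [Fintype α] (p q : α → ℝ) : EReal :=
  if ∀ a, q a = 0 → p a = 0 then ((∑ a, p a * Real.log (p a / q a) : ℝ) : EReal) else ⊤

/-- Shannon entropy. -/
def entropy {α : Type*} [Fintype α] (p : α → ℝ) : ℝ :=
  -∑ a, p a * Real.log (p a)

/-- Conditional mutual information `I(A;B|C)` under the mass function `p`. -/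
def condMI {Ω α β γ : Type*} [Fintype Ω] [Fintype α] [Fintype β] [Fintype γ]
    (p : Ω → ℝ) (A : Ω → α) (B : Ω → β) (C : Ω → γ) : ℝ :=
  entropy (pushf p (fun ω => (A ω, C ω))) + entropy (pushf p (fun ω => (B ω, C ω)))
    - entropy (pushf p (fun ω => (A ω, B ω, C ω))) - entropy (pushf p C)

/-- First marginal of a joint mass function. -/
def margFst {α β : Type*} [Fintype α] [Fintype β] (p : α × β → ℝ) : α → ℝ :=
  fun a => ∑ b, p (a, b)

/-- Conditional mass function of the second coordinate given the first. -/
def condSnd {α β : Type*} [Fintype α] [Fintype β] (p : α × β → ℝ) : α → β → ℝ :=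
  fun a b => p (a, b) / margFst p a

/-- Output distribution of a channel on an input distribution. -/
def outDist {α β : Type*} [Fintype α] [Fintype β] (ch : α → β → ℝ) (pa : α → ℝ) : β → ℝ :=
  fun b => ∑ a, pa a * ch a b

/-- The difference functional
`f(P'_X) = sup_{Q̂_X ≪ Q_X} D(P'_Y‖Q̂_Y) − D(P'_Z‖Q̂_Z)`. -/
def fdiff {X Y Z : Type*} [Fintype X] [Fintype Y] [Fintype Z]
    (pYgX : X → Y → ℝ) (pZgX : X → Z → ℝ) (qYgX : X → Y → ℝ) (qZgX : X → Z → ℝ)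
    (qX : X → ℝ) (pX' : X → ℝ) : EReal :=
  sSup {d : EReal | ∃ qhX : X → ℝ, IsPMF qhX ∧ (∀ x, qX x = 0 → qhX x = 0) ∧
    d = klDiv (outDist pYgX pX') (outDist qYgX qhX)
        - klDiv (outDist pZgX pX') (outDist qZgX qhX)}

/-- The quantity `G_{P_XY, Q_XY, P_XZ, Q_XZ}(R)`: the supremum over finite sets `𝒰`
(represented by `Fin m`) and channels `P_{U|X}` with `I_P(U;X|Y) ≤ R` and `I_P(U;X|Z) ≤ R`
of `∑_u P_U(u) f(P_{X|U}(·|u))`. -/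
def Gexp {X Y Z : Type*} [Fintype X] [Fintype Y] [Fintype Z]
    (pXY : X × Y → ℝ) (qXY : X × Y → ℝ) (pXZ : X × Z → ℝ) (qXZ : X × Z → ℝ)
    (R : ℝ) : EReal :=
  sSup {v : EReal | ∃ (m : ℕ) (ch : X → Fin m → ℝ),
    (∀ x, IsPMF (ch x)) ∧
    condMI (fun w : Fin m × X × Y => ch w.2.1 w.1 * pXY (w.2.1, w.2.2))
      (fun w => w.1) (fun w => w.2.1) (fun w => w.2.2) ≤ R ∧
    condMI (fun w : Fin m × X × Z => ch w.2.1 w.1 * pXZ (w.2.1, w.2.2))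
      (fun w => w.1) (fun w => w.2.1) (fun w => w.2.2) ≤ R ∧
    v = ∑ u : Fin m,
      ((∑ x, ch x u * margFst pXY x : ℝ) : EReal) *
        fdiff (condSnd pXY) (condSnd pXZ) (condSnd qXY) (condSnd qXZ)
          (margFst qXY)
          (fun x => ch x u * margFst pXY x / ∑ x', ch x' u * margFst pXY x')}

/-- The error exponent of distributed hypothesis testing, via the Ahlswede–Csiszár
multi-letter characterization. -/
def errExp {X W : Type*} [Fintype X] [Fintype W]
    (pXW qXW : X × W → ℝ) (R : ℝ) : EReal :=
  sSup {v : EReal | ∃ n : ℕ, 0 < n ∧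
    ∃ κ : (Fin n → X) → Fin (2 ^ ⌊(n : ℝ) * R⌋₊) → ℝ,
      (∀ x, IsPMF (κ x)) ∧
      v = (((n : ℝ)⁻¹ : ℝ) : EReal) *
        klDiv
          (fun mw : Fin (2 ^ ⌊(n : ℝ) * R⌋₊) × (Fin n → W) =>
            ∑ x : Fin n → X, (∏ i, pXW (x i, mw.2 i)) * κ x mw.1)
          (fun mw : Fin (2 ^ ⌊(n : ℝ) * R⌋₊) × (Fin n → W) =>
            ∑ x : Fin n → X, (∏ i, qXW (x i, mw.2 i)) * κ x mw.1)}

/-!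
Write `D = g(C)`. The chain rule splits `I(A;B,C|D)` in two ways: it dominates
`I(A;B|C,D) = I(A;B|C)` and equals `I(A;B|D) + I(A;C|B,D)`. The last term is at most `I(A;C|B)`,
again by the chain rule, and for a Markov chain `A → B → C` this bound vanishes. The only analytic
input is that `I(A;B|C)`, being the relative entropy of the law of `(A, B, C)` with respect to
`P_AC P_BC / P_C`, a mass function of the same total mass, is nonnegative.
-/

section Pushforward

variable {Ω α β : Type*} [Fintype Ω] {p : Ω → ℝ}

theorem pushf_apply [DecidableEq α] (p : Ω → ℝ) (f : Ω → α) (a : α) :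
    pushf p f a = ∑ ω with f ω = a, p ω := by
  rw [pushf, Finset.sum_filter]
  congr!

theorem pushf_nonneg (hp : 0 ≤ p) (f : Ω → α) : 0 ≤ pushf p f := fun a => by
  classical
  rw [pushf_apply]
  exact Finset.sum_nonneg fun ω _ => hp ω

theorem pushf_le_pushf_comp (hp : 0 ≤ p) (f : Ω → α) (φ : α → β) (a : α) :
    pushf p f a ≤ pushf p (φ ∘ f) (φ a) := by
  classical
  simp only [pushf_apply]
  exact Finset.sum_le_sum_of_subset_of_nonneg
    (Finset.monotone_filter_right _ fun _ _ => congrArg φ) fun ω _ _ => hp ω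

theorem sum_pushf_mul [Fintype α] (p : Ω → ℝ) (f : Ω → α) (h : α → ℝ) :
    ∑ a, pushf p f a * h a = ∑ ω, p ω * h (f ω) := by
  classical
  rw [← Finset.sum_fiberwise _ f]
  refine Finset.sum_congr rfl fun a _ => ?_
  rw [pushf_apply, Finset.sum_mul]
  refine Finset.sum_congr rfl fun ω hω => ?_
  rw [(Finset.mem_filter.mp hω).2]

theorem sum_pushf [Fintype α] (p : Ω → ℝ) (f : Ω → α) : ∑ a, pushf p f a = ∑ ω, p ω := by
  simpa using sum_pushf_mul p f 1

theorem sum_pushf_prodMk_left [Fintype α] (p : Ω → ℝ) (f : Ω → α) (g : Ω → β) (b : β) :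
    ∑ a, pushf p (fun ω => (f ω, g ω)) (a, b) = pushf p g b := by
  classical
  simp only [pushf_apply, Prod.mk.injEq]
  rw [← Finset.sum_fiberwise _ f]
  simp only [Finset.filter_filter, and_comm]

theorem entropy_pushf [Fintype α] (p : Ω → ℝ) (f : Ω → α) :
    entropy (pushf p f) = -∑ ω, p ω * Real.log (pushf p f (f ω)) :=
  congrArg Neg.neg (sum_pushf_mul p f fun a => Real.log (pushf p f a))

theorem entropy_pushf_comp [Fintype α] [Fintype β] (p : Ω → ℝ) (f : Ω → α) (φ : α → β) :
    entropy (pushf p (φ ∘ f)) = -∑ a, pushf p f a * Real.log (pushf p (φ ∘ f) (φ a)) := by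
  rw [entropy_pushf, sum_pushf_mul p f fun a => Real.log (pushf p (φ ∘ f) (φ a))]
  rfl

theorem entropy_pushf_congr_ker [Fintype α] [Fintype β] (p : Ω → ℝ) {f : Ω → α} {g : Ω → β}
    (h : Setoid.ker f = Setoid.ker g) : entropy (pushf p f) = entropy (pushf p g) := by
  classical
  have pushf_eq (ω : Ω) : pushf p f (f ω) = pushf p g (g ω) := by
    rw [pushf_apply, pushf_apply]
    exact Finset.sum_congr (Finset.filter_congr fun ω' _ => Setoid.ext_iff.mp h ω' ω) fun _ _ => rfl
  simp only [entropy_pushf, pushf_eq]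

end Pushforward

section Kernel

variable {Ω α β : Type*}

theorem setoid_ker_prodMk (f : Ω → α) (g : Ω → β) :
    Setoid.ker (fun ω => (f ω, g ω)) = Setoid.ker f ⊓ Setoid.ker g :=
  Setoid.ext fun _ _ => Prod.mk_inj

theorem setoid_ker_prodMk_comm (f : Ω → α) (g : Ω → β) :
    Setoid.ker (fun ω => (f ω, g ω)) = Setoid.ker fun ω => (g ω, f ω) := by
  simp only [setoid_ker_prodMk, inf_comm]

theorem setoid_ker_prodMk_comp (f : Ω → α) (φ : α → β) :
    Setoid.ker (fun ω => (f ω, φ (f ω))) = Setoid.ker f :=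
  Setoid.ext fun _ _ => Prod.mk_inj.trans (and_iff_left_of_imp (congrArg φ))

end Kernel

theorem sub_le_mul_log_div {x y : ℝ} (hx : 0 ≤ x) (hy : 0 ≤ y) (hxy : y = 0 → x = 0) :
    x - y ≤ x * Real.log (x / y) := by
  rcases hy.eq_or_lt' with rfl | hy
  · simp [hxy rfl]
  · have h := mul_nonneg hy.le (InformationTheory.klFun_nonneg (div_nonneg hx hy.le))
    have expand : y * InformationTheory.klFun (x / y) = x * Real.log (x / y) + y - x := by
      rw [InformationTheory.klFun]
      field_simp
    linarith

theorem sum_mul_log_div_nonneg {α : Type*} [Fintype α] {p q : α → ℝ} (hp : 0 ≤ p) (hq : 0 ≤ q)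
    (hpq : ∀ a, q a = 0 → p a = 0) (hsum : ∑ a, q a ≤ ∑ a, p a) :
    0 ≤ ∑ a, p a * Real.log (p a / q a) :=
  calc
    0 ≤ ∑ a, (p a - q a) := by rw [Finset.sum_sub_distrib]; exact sub_nonneg.mpr hsum
    _ ≤ ∑ a, p a * Real.log (p a / q a) :=
      Finset.sum_le_sum fun a _ => sub_le_mul_log_div (hp a) (hq a) (hpq a)

section CondProd

variable {Ω α β γ : Type*} [Fintype Ω] {p : Ω → ℝ}

/-- The mass function `P_AC P_BC / P_C` on triples `(a, b, c)`: for `p ≥ 0` it makes the first two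
coordinates conditionally independent given the third while keeping the laws of `(A, C)` and
`(B, C)`. Where `P_C` vanishes it is `0`, by `x / 0 = 0`. -/
def condProd (p : Ω → ℝ) (A : Ω → α) (B : Ω → β) (C : Ω → γ) : α × β × γ → ℝ :=
  fun x => pushf p (fun ω => (A ω, C ω)) (x.1, x.2.2) * pushf p (fun ω => (B ω, C ω)) x.2 /
    pushf p C x.2.2

theorem condProd_nonneg (hp : 0 ≤ p) (A : Ω → α) (B : Ω → β) (C : Ω → γ) :
    0 ≤ condProd p A B C := fun _ =>
  div_nonneg (mul_nonneg (pushf_nonneg hp _ _) (pushf_nonneg hp _ _)) (pushf_nonneg hp _ _)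

theorem sum_condProd [Fintype α] [Fintype β] [Fintype γ] (p : Ω → ℝ)
    (A : Ω → α) (B : Ω → β) (C : Ω → γ) : ∑ x, condProd p A B C x = ∑ ω, p ω :=
  calc
    ∑ x, condProd p A B C x = ∑ c, ∑ a, ∑ b, condProd p A B C (a, b, c) := by
      simp only [Fintype.sum_prod_type_right, Finset.sum_comm (γ := α)]
    _ = ∑ c, pushf p C c := by
      simp only [condProd, ← Finset.sum_div, ← Finset.mul_sum, ← Finset.sum_mul,
        sum_pushf_prodMk_left, mul_self_div_self]
    _ = ∑ ω, p ω := sum_pushf p C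

theorem pushf_marginals_pos (hp : 0 ≤ p) (A : Ω → α) (B : Ω → β) (C : Ω → γ) {x : α × β × γ}
    (hx : 0 < pushf p (fun ω => (A ω, B ω, C ω)) x) :
    0 < pushf p (fun ω => (A ω, C ω)) (x.1, x.2.2) ∧ 0 < pushf p (fun ω => (B ω, C ω)) x.2 ∧
      0 < pushf p C x.2.2 :=
  ⟨hx.trans_le (pushf_le_pushf_comp hp _ (fun y => (y.1, y.2.2)) x),
    hx.trans_le (pushf_le_pushf_comp hp _ Prod.snd x),
    hx.trans_le (pushf_le_pushf_comp hp _ (fun y => y.2.2) x)⟩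

theorem pushf_eq_zero_of_condProd_eq_zero (hp : 0 ≤ p) (A : Ω → α) (B : Ω → β) (C : Ω → γ)
    {x : α × β × γ} (hx : condProd p A B C x = 0) :
    pushf p (fun ω => (A ω, B ω, C ω)) x = 0 := by
  by_contra ht
  obtain ⟨hAC, hBC, hC⟩ := pushf_marginals_pos hp A B C ((pushf_nonneg hp _ x).lt_of_ne' ht)
  exact (div_pos (mul_pos hAC hBC) hC).ne' hx

theorem pushf_mul_log_div_condProd (hp : 0 ≤ p) (A : Ω → α) (B : Ω → β) (C : Ω → γ)
    (x : α × β × γ) :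
    pushf p (fun ω => (A ω, B ω, C ω)) x *
        Real.log (pushf p (fun ω => (A ω, B ω, C ω)) x / condProd p A B C x) =
      pushf p (fun ω => (A ω, B ω, C ω)) x *
        (Real.log (pushf p (fun ω => (A ω, B ω, C ω)) x) + Real.log (pushf p C x.2.2) -
          Real.log (pushf p (fun ω => (A ω, C ω)) (x.1, x.2.2)) -
          Real.log (pushf p (fun ω => (B ω, C ω)) x.2)) := by
  rcases (pushf_nonneg hp (fun ω => (A ω, B ω, C ω)) x).eq_or_lt' with ht | ht
  · simp only [ht, Pi.zero_apply, zero_mul]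
  · obtain ⟨hAC, hBC, hC⟩ := pushf_marginals_pos hp A B C ht
    rw [condProd, Real.log_div ht.ne' (by positivity), Real.log_div (by positivity) hC.ne',
      Real.log_mul hAC.ne' hBC.ne']
    ring

theorem condMI_eq_sum_mul_log_div [Fintype α] [Fintype β] [Fintype γ] (hp : 0 ≤ p)
    (A : Ω → α) (B : Ω → β) (C : Ω → γ) :
    condMI p A B C = ∑ x, pushf p (fun ω => (A ω, B ω, C ω)) x *
      Real.log (pushf p (fun ω => (A ω, B ω, C ω)) x / condProd p A B C x) := by
  have entropy_AC := entropy_pushf_comp p (fun ω => (A ω, B ω, C ω)) fun x => (x.1, x.2.2)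
  have entropy_BC := entropy_pushf_comp p (fun ω => (A ω, B ω, C ω)) Prod.snd
  have entropy_C := entropy_pushf_comp p (fun ω => (A ω, B ω, C ω)) fun x => x.2.2
  simp only [Function.comp_def] at entropy_AC entropy_BC entropy_C
  simp only [pushf_mul_log_div_condProd hp, mul_add, mul_sub, Finset.sum_sub_distrib,
    Finset.sum_add_distrib]
  rw [condMI, entropy_AC, entropy_BC, entropy_C, entropy]
  ring

end CondProd

section CondMI

variable {Ω α α' β β' γ γ' : Type*} [Fintype Ω] [Fintype α] [Fintype α'] [Fintype β] [Fintype β']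
  [Fintype γ] [Fintype γ'] {p : Ω → ℝ}

theorem condMI_nonneg (hp : 0 ≤ p) (A : Ω → α) (B : Ω → β) (C : Ω → γ) : 0 ≤ condMI p A B C := by
  rw [condMI_eq_sum_mul_log_div hp]
  refine sum_mul_log_div_nonneg (pushf_nonneg hp _) (condProd_nonneg hp A B C) ?_ ?_
  · exact fun x => pushf_eq_zero_of_condProd_eq_zero hp A B C
  · rw [sum_condProd, sum_pushf]

theorem condMI_congr_ker (p : Ω → ℝ) {A : Ω → α} {A' : Ω → α'} {B : Ω → β} {B' : Ω → β'}
    {C : Ω → γ} {C' : Ω → γ'} (hA : Setoid.ker A = Setoid.ker A')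
    (hB : Setoid.ker B = Setoid.ker B') (hC : Setoid.ker C = Setoid.ker C') :
    condMI p A B C = condMI p A' B' C' := by
  have hAC : Setoid.ker (fun ω => (A ω, C ω)) = Setoid.ker fun ω => (A' ω, C' ω) := by
    simp only [setoid_ker_prodMk, hA, hC]
  have hBC : Setoid.ker (fun ω => (B ω, C ω)) = Setoid.ker fun ω => (B' ω, C' ω) := by
    simp only [setoid_ker_prodMk, hB, hC]
  have hABC : Setoid.ker (fun ω => (A ω, B ω, C ω)) =
      Setoid.ker fun ω => (A' ω, B' ω, C' ω) := by
    simp only [setoid_ker_prodMk, hA, hB, hC]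
  rw [condMI, condMI, entropy_pushf_congr_ker p hAC, entropy_pushf_congr_ker p hBC,
    entropy_pushf_congr_ker p hABC, entropy_pushf_congr_ker p hC]

theorem condMI_prodMk (p : Ω → ℝ) (A : Ω → α) (B : Ω → β) (C : Ω → γ) (D : Ω → γ') :
    condMI p A (fun ω => (B ω, C ω)) D =
      condMI p A C D + condMI p A B (fun ω => (C ω, D ω)) := by
  have assoc_BCD : entropy (pushf p fun ω => ((B ω, C ω), D ω)) =
      entropy (pushf p fun ω => (B ω, C ω, D ω)) :=
    entropy_pushf_congr_ker p (by simp only [setoid_ker_prodMk, inf_assoc])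
  have assoc_ABCD : entropy (pushf p fun ω => (A ω, (B ω, C ω), D ω)) =
      entropy (pushf p fun ω => (A ω, B ω, C ω, D ω)) :=
    entropy_pushf_congr_ker p (by simp only [setoid_ker_prodMk, inf_assoc])
  rw [condMI, condMI, condMI, assoc_BCD, assoc_ABCD]
  ring

theorem condMI_prodMk_cond_le (hp : 0 ≤ p) (A : Ω → α) (B : Ω → β) (C : Ω → γ) (D : Ω → γ') :
    condMI p A B (fun ω => (C ω, D ω)) ≤ condMI p A (fun ω => (B ω, C ω)) D := by
  rw [condMI_prodMk]
  exact le_add_of_nonneg_left (condMI_nonneg hp A C D)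

theorem condMI_prodMk_comp_cond_le (hp : 0 ≤ p) (A : Ω → α) (B : Ω → β) (C : Ω → γ) (g : γ → γ') :
    condMI p A C (fun ω => (B ω, g (C ω))) ≤ condMI p A C B :=
  calc
    condMI p A C (fun ω => (B ω, g (C ω))) = condMI p A C (fun ω => (g (C ω), B ω)) :=
      condMI_congr_ker p rfl rfl (setoid_ker_prodMk_comm B fun ω => g (C ω))
    _ ≤ condMI p A (fun ω => (C ω, g (C ω))) B :=
      condMI_prodMk_cond_le hp A C (fun ω => g (C ω)) B
    _ = condMI p A C B := condMI_congr_ker p rfl (setoid_ker_prodMk_comp C g) rfl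

theorem condMI_le_condMI_of_comp_general (hp : 0 ≤ p) (A : Ω → α) (B : Ω → β) (C : Ω → γ)
    (g : γ → γ') :
    condMI p A B C ≤ condMI p A B (fun ω => g (C ω)) + condMI p A C B :=
  calc
    condMI p A B C = condMI p A B (fun ω => (C ω, g (C ω))) :=
      condMI_congr_ker p rfl rfl (setoid_ker_prodMk_comp C g).symm
    _ ≤ condMI p A (fun ω => (B ω, C ω)) (fun ω => g (C ω)) :=
      condMI_prodMk_cond_le hp A B C fun ω => g (C ω)
    _ = condMI p A (fun ω => (C ω, B ω)) (fun ω => g (C ω)) :=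
      condMI_congr_ker p rfl (setoid_ker_prodMk_comm B C) rfl
    _ = condMI p A B (fun ω => g (C ω)) + condMI p A C (fun ω => (B ω, g (C ω))) :=
      condMI_prodMk p A C B fun ω => g (C ω)
    _ ≤ condMI p A B (fun ω => g (C ω)) + condMI p A C B := by
      gcongr
      exact condMI_prodMk_comp_cond_le hp A B C g

end CondMI

/-- If `U → X → Y` is a Markov chain and `Z = g(Y)` for a function `g`,
then `I(U;X|Y) ≤ I(U;X|Z)`. -/
theorem condMI_le_condMI_of_comp {U X Y Z : Type*}
    [Fintype U] [Fintype X] [Fintype Y] [Fintype Z]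
    (P : U × X × Y → ℝ) (hP : IsPMF P)
    (hMarkov : condMI P (fun w => w.1) (fun w => w.2.2) (fun w => w.2.1) = 0)
    (g : Y → Z) :
    condMI P (fun w => w.1) (fun w => w.2.1) (fun w => w.2.2)
      ≤ condMI P (fun w => w.1) (fun w => w.2.1) (fun w => g w.2.2) := by
  simpa only [hMarkov, add_zero] using condMI_le_condMI_of_comp_general hP.1
    (fun w => w.1) (fun w => w.2.1) (fun w => w.2.2) g

end
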